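/- arXiv:1711.03056 — 3 statements merged into one kernel-verified Lean document; each statement's English description precedes it below -/
import Mathlib

section
/- If E is a semi-decidable equivalence relation on ℕ in which every equivalence class is infinite (IC), then there exist decidable equivalence relations F and G on ℕ, both IC, such that E = FGF (the composition of F, G, F) and E = F ∨ G (the transitive closure of F ∪ G). -/
/-- `E` is an equivalence relation on ℕ, viewed as a set of pairs:
reflexive, symmetric, transitive. -/
def IsEquivRel (E : Set (ℕ × ℕ)) : Prop :=
  (∀ n, (n, n) ∈ E) ∧ (∀ ⦃i j⦄, (i, j) ∈ E → (j, i) ∈ E) ∧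
    (∀ ⦃i j k⦄, (i, j) ∈ E → (j, k) ∈ E → (i, k) ∈ E)

/-- `H` is a symmetric relation. -/
def IsSymRel (H : Set (ℕ × ℕ)) : Prop := ∀ ⦃i j⦄, (i, j) ∈ H → (j, i) ∈ H

/-- `H` is a transitive relation. -/
def IsTransRel (H : Set (ℕ × ℕ)) : Prop :=
  ∀ ⦃i j k⦄, (i, j) ∈ H → (j, k) ∈ H → (i, k) ∈ H

/-- A relation on ℕ is decidable if membership in it is a computable predicate. -/
def DecidableRelSet (R : Set (ℕ × ℕ)) : Prop :=
  ComputablePred (fun p : ℕ × ℕ => p ∈ R)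

/-- `ν : ℕ₊ → ℕ × ℕ` (modelled as a function on ℕ, restricted to positive
arguments) is an enumeration of `R`: a computable function whose range (over
positive arguments) is `R`. -/
def IsEnumeration (ν : ℕ → ℕ × ℕ) (R : Set (ℕ × ℕ)) : Prop :=
  Computable ν ∧ R = {e | ∃ n, 1 ≤ n ∧ ν n = e}

/-- A relation on ℕ is semi-decidable (computably enumerable) if it is the
range of a computable function `ν : ℕ₊ → ℕ × ℕ`. -/
def SemiDecidableRel (R : Set (ℕ × ℕ)) : Prop := ∃ ν, IsEnumeration ν R

/-- A subset of ℕ is semi-decidable (computably enumerable) if it is the range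
of a computable function on positive arguments. -/
def SemiDecidableSet (A : Set ℕ) : Prop :=
  ∃ f : ℕ → ℕ, Computable f ∧ A = {a | ∃ n, 1 ≤ n ∧ f n = a}

/-- `E` is IC: every equivalence class `[i]_E = {j | (i,j) ∈ E}` is infinite. -/
def IC (E : Set (ℕ × ℕ)) : Prop := ∀ i, {j | (i, j) ∈ E}.Infinite

/-- `E` is FC: every equivalence class `[i]_E = {j | (i,j) ∈ E}` is finite. -/
def FC (E : Set (ℕ × ℕ)) : Prop := ∀ i, {j | (i, j) ∈ E}.Finite

/-- Composition of relations: `RS = {(i,k) | ∃ j, (i,j) ∈ R ∧ (j,k) ∈ S}`. -/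
def relComp (R S : Set (ℕ × ℕ)) : Set (ℕ × ℕ) :=
  {p | ∃ j, (p.1, j) ∈ R ∧ (j, p.2) ∈ S}

/-- Converse relation: `R⁻¹ = {(j,i) | (i,j) ∈ R}`. -/
def relInv (R : Set (ℕ × ℕ)) : Set (ℕ × ℕ) := {p | (p.2, p.1) ∈ R}

/-- Transitive closure of a relation, `tc R = ⋃_{n ≥ 1} Rⁿ`. -/
def tc (R : Set (ℕ × ℕ)) : Set (ℕ × ℕ) :=
  {p | Relation.TransGen (fun i j => (i, j) ∈ R) p.1 p.2}

/-- `ξ` is a coding of the enumeration `ν` (with `π = ν ∘ ξ`):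
a computable `ξ : ℕ₊ → ℕ₊` such that `1 < ξ(1)`, `π₁(π(1)) = π₁(ν(1))`,
`max {1, π₁(ν(1))} < π₂(π(1))`, and for every `n ≥ 1`: `ξ(n) < ξ(n+1)`,
`π₁(ν(ξ(n+1))) = π₁(ν(n+1))`, and
`max {π₁(π(n+1)), π₂(π(n))} < π₂(π(n+1))`. -/
def IsCoding (ν : ℕ → ℕ × ℕ) (ξ : ℕ → ℕ) : Prop :=
  Computable ξ ∧
  1 < ξ 1 ∧ (ν (ξ 1)).1 = (ν 1).1 ∧ max 1 (ν 1).1 < (ν (ξ 1)).2 ∧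
  ∀ n, 1 ≤ n →
    ξ n < ξ (n + 1) ∧ (ν (ξ (n + 1))).1 = (ν (n + 1)).1 ∧
    max (ν (ξ (n + 1))).1 (ν (ξ n)).2 < (ν (ξ (n + 1))).2

/-- `R_ξ = {π(n) | n ∈ ℕ₊}` where `π = ν ∘ ξ`. -/
def Rcod (ν : ℕ → ℕ × ℕ) (ξ : ℕ → ℕ) : Set (ℕ × ℕ) :=
  {e | ∃ n, 1 ≤ n ∧ ν (ξ n) = e}

/-- `S_ξ = {(π₂(π(m)), π₂(π(n))) | m, n ∈ ℕ₊ and ν(n) = (ν(m))⁻¹}`. -/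
def Scod (ν : ℕ → ℕ × ℕ) (ξ : ℕ → ℕ) : Set (ℕ × ℕ) :=
  {e | ∃ m, 1 ≤ m ∧ ∃ n, 1 ≤ n ∧ ν n = ((ν m).2, (ν m).1) ∧
    e = ((ν (ξ m)).2, (ν (ξ n)).2)}

/-- `T_ξ = {(π₂(π(m)), π₂(π(n))) | m, n ∈ ℕ₊ and ν(n) = ν(m)}`. -/
def Tcod (ν : ℕ → ℕ × ℕ) (ξ : ℕ → ℕ) : Set (ℕ × ℕ) :=
  {e | ∃ m, 1 ≤ m ∧ ∃ n, 1 ≤ n ∧ ν n = ν m ∧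
    e = ((ν (ξ m)).2, (ν (ξ n)).2)}

/-- The identity relation `I = {(n,n) | n ∈ ℕ}`. -/
def diagRel : Set (ℕ × ℕ) := {p | p.1 = p.2}

/-- The field of a relation: `F(H) = {i | ∃ j, (i,j) ∈ H ∨ (j,i) ∈ H}`. -/
def fld (H : Set (ℕ × ℕ)) : Set ℕ := {i | ∃ j, (i, j) ∈ H ∨ (j, i) ∈ H}

/-! List the pairs of `E` as `μ 0, μ 1, …`, each infinitely often, and attach to each
`μ n = (i, j)` a code `p n > i` in the class of `i`, with `p` strictly increasing. The codes form a
decidable set, so every `x` computably carries an arrow of `E`: `μ n` if `x = p n`, and the loop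
`(x, x)` if `x` is not a code. Let `F` be the equivalence relation generated by linking every number
to the source of its arrow, and let `G` identify numbers whose arrows agree up to reversal. The
source of the arrow of `x` is at most `x`, so following sources down to a fixed point decides `F`,
although codes may themselves be sources of arrows. If `(i, j) ∈ E`, then a code `x` of `(i, j)` and
a code `y` of `(j, i)` give `i F x G y F j`. -/

section Relations

variable {E Q R S : Set (ℕ × ℕ)}

theorem relComp_subset (hE : IsTransRel E) (hR : R ⊆ E) (hS : S ⊆ E) : relComp R S ⊆ E := by
  rintro ⟨i, k⟩ ⟨j, hij, hjk⟩
  exact hE (hR hij) (hS hjk)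

theorem subset_tc (R : Set (ℕ × ℕ)) : R ⊆ tc R :=
  fun _ h => Relation.TransGen.single h

theorem isTransRel_tc (R : Set (ℕ × ℕ)) : IsTransRel (tc R) :=
  fun _ _ _ hij hjk => Relation.TransGen.trans hij hjk

theorem tc_subset (hE : IsTransRel E) (hR : R ⊆ E) : tc R ⊆ E := by
  have : IsTrans ℕ (fun i j => (i, j) ∈ E) := ⟨fun _ _ _ hij hjk => hE hij hjk⟩
  rintro ⟨i, j⟩ hij
  exact Relation.transGen_minimal (r' := fun i j => (i, j) ∈ E) (fun _ _ h => hR h) i j hij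

end Relations

section Computability

variable {α β σ : Type*} [Primcodable α] [Primcodable β] [Primcodable σ]

theorem computablePred_comp {q : β → Prop} {f : α → β} (hq : ComputablePred q)
    (hf : Computable f) : ComputablePred fun a => q (f a) :=
  ComputablePred.computable_of_manyOneReducible ⟨f, hf, fun _ => Iff.rfl⟩ hq

theorem computable_iterate {f : α → ℕ} {g : α → σ} {h : α → σ → σ} (hf : Computable f)
    (hg : Computable g) (hh : Computable₂ h) : Computable fun a => (h a)^[f a] (g a) :=
  (Computable.nat_rec hf hg
    (hh.comp Computable.fst (Computable.snd.comp Computable.snd)).to₂).of_eq fun a => by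
      induction f a with
      | zero => rfl
      | succ n ih => rw [Function.iterate_succ_apply', ← ih]

/-- The range of a strictly increasing computable `p` is decidable: `x` lies in it if and only if
`x = p k` for the least `k` with `x ≤ p k`. -/
theorem computable_extend {p : ℕ → ℕ} {b d : ℕ → σ} (hp : Computable p) (hmono : StrictMono p)
    (hb : Computable b) (hd : Computable d) : Computable (Function.extend p b d) := by
  have hbound (x : ℕ) : ∃ n, x ≤ p n := ⟨x, hmono.le_apply⟩
  let k (x : ℕ) : ℕ := Nat.find (hbound x)
  have hk : Computable k := Computable.find (P := fun x n => x ≤ p n)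
    (computablePred_comp Primrec.nat_le.computablePred
      (Computable.fst.pair (hp.comp Computable.snd))) hbound
  have hkp (n : ℕ) : k (p n) = n := by
    simp only [k, Nat.find_eq_iff, hmono.le_iff_le, le_refl, true_and, not_le, imp_self,
      implies_true]
  have hcode : Computable fun x => decide (p (k x) = x) :=
    (computablePred_comp Primrec.eq.computablePred ((hp.comp hk).pair Computable.id)).decide
  refine (hcode.cond (hb.comp hk) hd).of_eq fun x => ?_
  by_cases hx : ∃ n, p n = x
  · obtain ⟨n, rfl⟩ := hx
    simp only [hkp, decide_true, cond_true, hmono.injective.extend_apply]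
  · have hne : p (k x) ≠ x := fun h => hx ⟨k x, h⟩
    simp only [hne, decide_false, cond_false, Function.extend_apply' b d x hx]

end Computability

section Kernels

variable {α : Type*}

/-- The kernel `{(x, y) | f x = f y}` of a function on ℕ. -/
def kerRel (f : ℕ → α) : Set (ℕ × ℕ) := {q | f q.1 = f q.2}

theorem isEquivRel_kerRel (f : ℕ → α) : IsEquivRel (kerRel f) :=
  ⟨fun _ => rfl, fun _ _ h => Eq.symm h, fun _ _ _ h h' => Eq.trans h h'⟩

theorem decidableRelSet_kerRel [Primcodable α] {f : ℕ → α} (hf : Computable f) :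
    DecidableRelSet (kerRel f) :=
  computablePred_comp (q := fun e : α × α => e.1 = e.2) Primrec.eq.computablePred
    ((hf.comp Computable.fst).pair (hf.comp Computable.snd))

theorem decidableRelSet_kerRel_sym2 [Primcodable α] {l : ℕ → α × α} (hl : Computable l) :
    DecidableRelSet (kerRel fun x => s((l x).1, (l x).2)) := by
  have heq : PrimrecPred fun q : (α × α) × (α × α) => q.1 = q.2 ∨ q.1 = q.2.swap :=
    Primrec.eq.or (Primrec.eq.comp Primrec.fst
      ((Primrec.snd.comp Primrec.snd).pair (Primrec.fst.comp Primrec.snd)))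
  exact (computablePred_comp heq.computablePred
    ((hl.comp Computable.fst).pair (hl.comp Computable.snd))).of_eq
      fun _ => Sym2.mk_eq_mk_iff.symm

theorem kerRel_subset {E : Set (ℕ × ℕ)} (hE : IsEquivRel E) {f : ℕ → ℕ}
    (hf : ∀ x, (f x, x) ∈ E) : kerRel f ⊆ E := by
  rintro ⟨x, y⟩ (hxy : f x = f y)
  exact hE.2.2 (hE.2.1 (hf x)) (hxy ▸ hf y)

end Kernels

section ForestRoot

variable {f : ℕ → ℕ}

/-- The root of the tree of `x` in the forest on ℕ in which the parent of `x` is `f x`. It is meant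
for `f` with `f x ≤ x`, where a path from `x` reaches a fixed point of `f` in at most `x` steps. -/
def forestRoot (f : ℕ → ℕ) (x : ℕ) : ℕ := f^[x] x

theorem computable_forestRoot (hf : Computable f) : Computable (forestRoot f) :=
  computable_iterate Computable.id Computable.id (hf.comp Computable.snd).to₂

theorem apply_forestRoot (hf : ∀ x, f x ≤ x) (x : ℕ) : f (forestRoot f x) = forestRoot f x := by
  have hdescent (n : ℕ) : f (f^[n] x) = f^[n] x ∨ f^[n] x + n ≤ x := by
    induction n with
    | zero => exact Or.inr le_rfl
    | succ n ih =>
      rw [Function.iterate_succ_apply']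
      rcases ih with hfix | hle
      · exact Or.inl (by rw [hfix, hfix])
      · rcases (hf (f^[n] x)).eq_or_lt with hfix | hlt
        · exact Or.inl (by rw [hfix, hfix])
        · exact Or.inr (by omega)
  rcases hdescent x with hfix | hle
  · exact hfix
  · have hzero : forestRoot f x = 0 := by rw [forestRoot]; omega
    rw [hzero, Nat.le_zero.mp (hf 0)]

theorem forestRoot_apply (hf : ∀ x, f x ≤ x) (x : ℕ) : forestRoot f (f x) = forestRoot f x :=
  calc forestRoot f (f x)
    _ = f^[x - f x] (forestRoot f (f x)) :=
      (Function.iterate_fixed (apply_forestRoot hf (f x)) _).symm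
    _ = f^[x] (f x) := by
      rw [forestRoot, ← Function.iterate_add_apply, Nat.sub_add_cancel (hf x)]
    _ = f (forestRoot f x) := by
      rw [forestRoot, ← Function.iterate_succ_apply, Function.iterate_succ_apply']
    _ = forestRoot f x := apply_forestRoot hf x

theorem kerRel_forestRoot_subset {E : Set (ℕ × ℕ)} (hE : IsEquivRel E)
    (hf : ∀ x, (f x, x) ∈ E) : kerRel (forestRoot f) ⊆ E := by
  have hiter (n x : ℕ) : (f^[n] x, x) ∈ E := by
    induction n with
    | zero => exact hE.1 x
    | succ n ih =>
      rw [Function.iterate_succ_apply']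
      exact hE.2.2 (hf _) ih
  exact kerRel_subset hE fun x => hiter x x

end ForestRoot

namespace SemiDecidableRel

variable {R : Set (ℕ × ℕ)}

theorem exists_computable_range_eq (hR : SemiDecidableRel R) :
    ∃ ν : ℕ → ℕ × ℕ, Computable ν ∧ Set.range ν = R := by
  obtain ⟨ν, hν, rfl⟩ := hR
  refine ⟨fun n => ν (n + 1), hν.comp Computable.succ, Set.ext fun e => ⟨?_, ?_⟩⟩
  · rintro ⟨n, rfl⟩
    exact ⟨n + 1, n.succ_pos, rfl⟩
  · rintro ⟨n, hn, rfl⟩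
    exact ⟨n - 1, congrArg ν (Nat.sub_add_cancel hn)⟩

theorem exists_computable_infinite_fibers (hR : SemiDecidableRel R) :
    ∃ μ : ℕ → ℕ × ℕ, Computable μ ∧ (∀ n, μ n ∈ R) ∧ ∀ e ∈ R, {n | μ n = e}.Infinite := by
  obtain ⟨ν, hν, rfl⟩ := hR.exists_computable_range_eq
  refine ⟨fun n => ν n.unpair.1, hν.comp (Computable.fst.comp Computable.unpair),
    fun n => Set.mem_range_self _, ?_⟩
  rintro _ ⟨n, rfl⟩
  refine Set.infinite_of_injective_forall_mem (f := Nat.pair n)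
    (fun _ _ h => (Nat.pair_eq_pair.mp h).2) fun m => ?_
  simp only [Set.mem_ofPred_eq, Nat.unpair_pair]

theorem exists_computable_gt (hR : SemiDecidableRel R) (hIC : IC R) :
    ∃ f : ℕ → ℕ → ℕ, Computable₂ f ∧ ∀ i c, (i, f i c) ∈ R ∧ c < f i c := by
  obtain ⟨ν, hν, rfl⟩ := hR.exists_computable_range_eq
  have hex (q : ℕ × ℕ) : ∃ n, (ν n).1 = q.1 ∧ q.2 < (ν n).2 := by
    obtain ⟨j, ⟨n, hn⟩, hj⟩ := (hIC q.1).exists_gt q.2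
    exact ⟨n, by rw [hn], by rwa [hn]⟩
  have hsearch : PrimrecPred fun z : (ℕ × ℕ) × (ℕ × ℕ) => z.2.1 = z.1.1 ∧ z.1.2 < z.2.2 :=
    (Primrec.eq.comp (Primrec.fst.comp Primrec.snd) (Primrec.fst.comp Primrec.fst)).and
      (Primrec.nat_lt.comp (Primrec.snd.comp Primrec.fst) (Primrec.snd.comp Primrec.snd))
  have hfind : Computable fun q => Nat.find (hex q) :=
    Computable.find (P := fun (q : ℕ × ℕ) n => (ν n).1 = q.1 ∧ q.2 < (ν n).2)
      (computablePred_comp hsearch.computablePred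
        (Computable.fst.pair (hν.comp Computable.snd))) hex
  refine ⟨fun i c => (ν (Nat.find (hex (i, c)))).2, Computable.snd.comp (hν.comp hfind),
    fun i c => ?_⟩
  obtain ⟨hfst, hlt⟩ := Nat.find_spec (hex (i, c))
  exact ⟨⟨_, Prod.ext hfst rfl⟩, hlt⟩

theorem exists_computable_strictMono (hR : SemiDecidableRel R) (hIC : IC R) {a : ℕ → ℕ}
    (ha : Computable a) :
    ∃ p : ℕ → ℕ, Computable p ∧ StrictMono p ∧ ∀ n, (a n, p n) ∈ R ∧ a n < p n := by
  obtain ⟨f, hf, hfR⟩ := hR.exists_computable_gt hIC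
  let next (n y : ℕ) : ℕ := f (a n) (max (a n) y)
  have hnext : Computable₂ next :=
    have han : Computable fun z : ℕ × ℕ => a z.1 := ha.comp Computable.fst
    hf.comp han (Primrec.nat_max.to_comp.comp han Computable.snd)
  let q (n : ℕ) : ℕ := Nat.rec 0 next n
  have hq : Computable q :=
    Computable.nat_rec Computable.id (Computable.const 0)
      (hnext.comp (Computable.fst.comp Computable.snd) (Computable.snd.comp Computable.snd)).to₂
  have hlt (n : ℕ) : max (a n) (q n) < q (n + 1) := (hfR _ _).2
  exact ⟨fun n => q (n + 1), hq.comp Computable.succ,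
    strictMono_nat_of_lt_succ fun n => (le_max_right _ _).trans_lt (hlt (n + 1)),
    fun n => ⟨(hfR _ _).1, (le_max_left _ _).trans_lt (hlt n)⟩⟩

end SemiDecidableRel

/-- A computable assignment of a pair `l x ∈ E`, thought of as an arrow from `(l x).1` to `(l x).2`,
to every natural number `x`, such that `x` is related to the source of its arrow and is not
smaller, and every pair of `E` is assigned to infinitely many `x`. -/
structure IsArrowLabelling (E : Set (ℕ × ℕ)) (l : ℕ → ℕ × ℕ) : Prop where
  computable : Computable l
  mem (x : ℕ) : l x ∈ E
  source_rel (x : ℕ) : ((l x).1, x) ∈ E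
  source_le (x : ℕ) : (l x).1 ≤ x
  infinite_fiber {e : ℕ × ℕ} : e ∈ E → {x | l x = e}.Infinite

theorem SemiDecidableRel.exists_isArrowLabelling {E : Set (ℕ × ℕ)} (hsd : SemiDecidableRel E)
    (hrefl : ∀ n, (n, n) ∈ E) (hIC : IC E) : ∃ l, IsArrowLabelling E l := by
  obtain ⟨μ, hμ, hμE, hfiber⟩ := hsd.exists_computable_infinite_fibers
  obtain ⟨p, hp, hmono, hpE⟩ := hsd.exists_computable_strictMono hIC (Computable.fst.comp hμ)
  let l : ℕ → ℕ × ℕ := Function.extend p μ fun x => (x, x)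
  have hlp (n : ℕ) : l (p n) = μ n := hmono.injective.extend_apply _ _ n
  have hl (x : ℕ) : l x ∈ E ∧ ((l x).1, x) ∈ E ∧ (l x).1 ≤ x := by
    by_cases hx : ∃ n, p n = x
    · obtain ⟨n, rfl⟩ := hx
      rw [hlp]
      exact ⟨hμE n, (hpE n).1, (hpE n).2.le⟩
    · have hloop : l x = (x, x) := Function.extend_apply' _ _ _ hx
      rw [hloop]
      exact ⟨hrefl x, hrefl x, le_rfl⟩
  refine ⟨l, computable_extend hp hmono hμ (Computable.id.pair Computable.id),
    fun x => (hl x).1, fun x => (hl x).2.1, fun x => (hl x).2.2, fun {e} he => ?_⟩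
  refine ((hfiber e he).image hmono.injective.injOn).mono ?_
  rintro _ ⟨n, hn, rfl⟩
  exact (hlp n).trans hn

/-- For a labelling with `(l x).1 ≤ x`, the equivalence relation generated by linking every number
to the source of its arrow. -/
def sourceRel (l : ℕ → ℕ × ℕ) : Set (ℕ × ℕ) := kerRel (forestRoot fun x => (l x).1)

/-- The relation between numbers whose arrows agree up to reversal. -/
def edgeRel (l : ℕ → ℕ × ℕ) : Set (ℕ × ℕ) := kerRel fun x => s((l x).1, (l x).2)

namespace IsArrowLabelling

variable {E : Set (ℕ × ℕ)} {l : ℕ → ℕ × ℕ}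

theorem source_mem_sourceRel (hl : IsArrowLabelling E l) (x : ℕ) : ((l x).1, x) ∈ sourceRel l :=
  forestRoot_apply hl.source_le x

theorem sourceRel_subset (hl : IsArrowLabelling E l) (hE : IsEquivRel E) : sourceRel l ⊆ E :=
  kerRel_forestRoot_subset hE hl.source_rel

theorem edgeRel_subset (hl : IsArrowLabelling E l) (hE : IsEquivRel E) : edgeRel l ⊆ E := by
  obtain ⟨-, hsymm, htrans⟩ := hE
  rintro ⟨x, y⟩ hxy
  rcases Sym2.mk_eq_mk_iff.mp hxy with heq | hswap
  · have hx : ((l y).1, x) ∈ E := heq ▸ hl.source_rel x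
    exact htrans (hsymm hx) (hl.source_rel y)
  · have hx : ((l y).2, x) ∈ E := by simpa only [hswap, Prod.fst_swap] using hl.source_rel x
    exact htrans (hsymm hx) (htrans (hsymm (hl.mem y)) (hl.source_rel y))

theorem ic_sourceRel (hl : IsArrowLabelling E l) (hrefl : ∀ n, (n, n) ∈ E) :
    IC (sourceRel l) := by
  refine fun i => (hl.infinite_fiber (hrefl i)).mono fun x (hx : l x = (i, i)) => ?_
  simpa only [hx, Set.mem_ofPred_eq] using hl.source_mem_sourceRel x

theorem ic_edgeRel (hl : IsArrowLabelling E l) : IC (edgeRel l) := by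
  refine fun i => (hl.infinite_fiber (hl.mem i)).mono fun x (hx : l x = l i) => ?_
  exact congrArg (fun e : ℕ × ℕ => s(e.1, e.2)) hx.symm

theorem subset_relComp (hl : IsArrowLabelling E l) (hsymm : IsSymRel E) :
    E ⊆ relComp (relComp (sourceRel l) (edgeRel l)) (sourceRel l) := by
  rintro ⟨i, j⟩ hij
  obtain ⟨x, hx : l x = (i, j)⟩ := (hl.infinite_fiber hij).nonempty
  obtain ⟨y, hy : l y = (j, i)⟩ := (hl.infinite_fiber (hsymm hij)).nonempty
  have hix : (i, x) ∈ sourceRel l := by simpa only [hx] using hl.source_mem_sourceRel x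
  have hjy : (j, y) ∈ sourceRel l := by simpa only [hy] using hl.source_mem_sourceRel y
  have hxy : (x, y) ∈ edgeRel l := Sym2.mk_eq_mk_iff.mpr (Or.inr (by rw [hx, hy]; rfl))
  exact ⟨y, ⟨x, hix, hxy⟩, (isEquivRel_kerRel _).2.1 hjy⟩

end IsArrowLabelling

theorem stmt_0 (E : Set (ℕ × ℕ)) (hE : IsEquivRel E) (hsd : SemiDecidableRel E)
    (hIC : IC E) :
    ∃ F G : Set (ℕ × ℕ),
      IsEquivRel F ∧ IsEquivRel G ∧ DecidableRelSet F ∧ DecidableRelSet G ∧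
      IC F ∧ IC G ∧
      E = relComp (relComp F G) F ∧ E = tc (F ∪ G) := by
  obtain ⟨l, hl⟩ := hsd.exists_isArrowLabelling hE.1 hIC
  let F := sourceRel l
  let G := edgeRel l
  have hFE : F ⊆ E := hl.sourceRel_subset hE
  have hGE : G ⊆ E := hl.edgeRel_subset hE
  have hE_FGF : E ⊆ relComp (relComp F G) F := hl.subset_relComp hE.2.1
  have hFGF_E : relComp (relComp F G) F ⊆ E :=
    relComp_subset hE.2.2 (relComp_subset hE.2.2 hFE hGE) hFE
  have hF_tc : F ⊆ tc (F ∪ G) := Set.subset_union_left.trans (subset_tc _)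
  have hG_tc : G ⊆ tc (F ∪ G) := Set.subset_union_right.trans (subset_tc _)
  have hFGF_tc : relComp (relComp F G) F ⊆ tc (F ∪ G) :=
    relComp_subset (isTransRel_tc _) (relComp_subset (isTransRel_tc _) hF_tc hG_tc) hF_tc
  exact ⟨F, G, isEquivRel_kerRel _, isEquivRel_kerRel _,
    decidableRelSet_kerRel (computable_forestRoot (Computable.fst.comp hl.computable)),
    decidableRelSet_kerRel_sym2 hl.computable,
    hl.ic_sourceRel hE.1, hl.ic_edgeRel, hE_FGF.antisymm hFGF_E,
    (hE_FGF.trans hFGF_tc).antisymm (tc_subset hE.2.2 (Set.union_subset hFE hGE))⟩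
end

section
/- For a semi-decidable equivalence relation E on ℕ, the following three conditions are equivalent: (i) some enumeration of E has a coding; (ii) every equivalence class of E is infinite (E is IC); (iii) every enumeration of E has a coding. -/
/-!
If `ξ` codes `ν`, then `n ↦ π₂(π(n))` is strictly increasing and sends every index `n` of a pair
`(i, j)` to an element of `[i]_E` larger than `i`. Choosing an index for each `j ∈ [i]_E` therefore
gives an injection of `[i]_E` into itself that misses `i ∈ [i]_E`, so `[i]_E` is infinite.
Conversely, if all classes are infinite, an unbounded search through `ν` always finds an admissible
next value of `ξ`, and iterating this search is computable.
-/

section Computability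

variable {α : Type*} [Primcodable α]

theorem computablePred_lt {f g : α → ℕ} (hf : Computable f) (hg : Computable g) :
    ComputablePred fun a => f a < g a :=
  (Primrec.nat_lt.decide.to_comp.comp hf hg).computablePred

theorem computablePred_eq {β : Type*} [Primcodable β] {f g : α → β}
    (hf : Computable f) (hg : Computable g) : ComputablePred fun a => f a = g a := by
  classical exact (Primrec.eq.decide.to_comp.comp hf hg).computablePred

theorem computablePred_and {p q : α → Prop} (hp : ComputablePred p) (hq : ComputablePred q) :
    ComputablePred fun a => p a ∧ q a := by
  classical
  exact Computable.computablePred <|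
    (Primrec.and.to_comp.comp hp.decide hq.decide).of_eq fun _ => (Bool.decide_and _ _).symm

theorem exists_computable_choice {P : α → ℕ → Prop}
    (hP : ComputablePred fun p : α × ℕ => P p.1 p.2) (h : ∀ a, ∃ k, P a k) :
    ∃ f : α → ℕ, Computable f ∧ ∀ a, P a (f a) := by
  classical exact ⟨_, Computable.find hP h, fun a => Nat.find_spec (h a)⟩

theorem exists_computable_seq {R : ℕ → ℕ → ℕ → Prop}
    (hR : ComputablePred fun p : (ℕ × ℕ) × ℕ => R p.1.1 p.1.2 p.2)
    (h : ∀ n x, ∃ y, R n x y) (x₀ : ℕ) :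
    ∃ ξ : ℕ → ℕ, Computable ξ ∧ ξ 0 = x₀ ∧ ∀ n, R n (ξ n) (ξ (n + 1)) := by
  obtain ⟨next, hnext, hR_next⟩ :=
    exists_computable_choice (P := fun a : ℕ × ℕ => R a.1 a.2) hR fun a => h a.1 a.2
  refine ⟨Nat.rec x₀ fun n x => next (n, x), ?_, rfl, fun n => hR_next (n, _)⟩
  exact Computable.nat_rec Computable.id (Computable.const x₀) (hnext.comp Computable.snd)

end Computability

section Coding

variable {ν : ℕ → ℕ × ℕ} {ξ : ℕ → ℕ} {E : Set (ℕ × ℕ)}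

theorem IsEnumeration.mem_iff (hν : IsEnumeration ν E) {e : ℕ × ℕ} :
    e ∈ E ↔ ∃ n, 1 ≤ n ∧ ν n = e := by
  rw [hν.2]
  rfl

theorem IsEnumeration.infinite_indices_of_infinite_class (hν : IsEnumeration ν E) {i : ℕ}
    (hi : {j | (i, j) ∈ E}.Infinite) (b : ℕ) : {k | (ν k).1 = i ∧ b < (ν k).2}.Infinite := by
  refine Set.Infinite.of_image (fun k => (ν k).2) ((hi.sdiff (Set.finite_Iic b)).mono ?_)
  rintro j ⟨hj, hbj⟩
  obtain ⟨k, -, hk⟩ := hν.mem_iff.1 hj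
  exact ⟨k, by simpa [hk] using hbj, by simp [hk]⟩

namespace IsCoding

theorem strictMonoOn (hξ : IsCoding ν ξ) : StrictMonoOn ξ (Set.Ici 1) :=
  strictMonoOn_of_lt_add_one Set.ordConnected_Ici fun n _ hn _ => (hξ.2.2.2.2 n hn).1

theorem one_lt (hξ : IsCoding ν ξ) {n : ℕ} (hn : 1 ≤ n) : 1 < ξ n :=
  hξ.2.1.trans_le (hξ.strictMonoOn.monotoneOn Set.self_mem_Ici hn hn)

theorem strictMonoOn_snd (hξ : IsCoding ν ξ) :
    StrictMonoOn (fun n => (ν (ξ n)).2) (Set.Ici 1) :=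
  strictMonoOn_of_lt_add_one Set.ordConnected_Ici fun n _ hn _ =>
    (le_max_right _ _).trans_lt (hξ.2.2.2.2 n hn).2.2

theorem fst_eq (hξ : IsCoding ν ξ) {n : ℕ} (hn : 1 ≤ n) : (ν (ξ n)).1 = (ν n).1 := by
  cases n, hn using Nat.le_induction with
  | base => exact hξ.2.2.1
  | succ n hn => exact (hξ.2.2.2.2 n hn).2.1

theorem fst_lt_snd (hξ : IsCoding ν ξ) {n : ℕ} (hn : 1 ≤ n) : (ν n).1 < (ν (ξ n)).2 := by
  cases n, hn using Nat.le_induction with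
  | base => exact (le_max_right _ _).trans_lt hξ.2.2.2.1
  | succ n hn =>
    obtain ⟨-, hfst, hsnd⟩ := hξ.2.2.2.2 n hn
    exact hfst ▸ (le_max_left _ _).trans_lt hsnd

theorem infinite_class (hξ : IsCoding ν ξ) (hν : IsEnumeration ν E) {i : ℕ} (hi : (i, i) ∈ E) :
    {j | (i, j) ∈ E}.Infinite := by
  intro hfin
  choose! index index_pos ν_index using
    fun j (hj : j ∈ {j | (i, j) ∈ E}) => hν.mem_iff.1 hj
  let shift : ℕ → ℕ := fun j => (ν (ξ (index j))).2
  have mapsTo : Set.MapsTo shift {j | (i, j) ∈ E} {j | (i, j) ∈ E} := fun j hj =>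
    hν.mem_iff.2 ⟨ξ (index j), (hξ.one_lt (index_pos j hj)).le,
      Prod.ext (by rw [hξ.fst_eq (index_pos j hj), ν_index j hj]) rfl⟩
  have injOn : Set.InjOn shift {j | (i, j) ∈ E} := fun j hj k hk hjk => by
    have hindex : index j = index k :=
      hξ.strictMonoOn_snd.injOn (index_pos j hj) (index_pos k hk) hjk
    simpa [ν_index j hj, ν_index k hk] using congrArg ν hindex
  obtain ⟨j, hj, hji⟩ := ((hfin.injOn_iff_bijOn_of_mapsTo mapsTo).1 injOn).surjOn hi
  have hlt : i < shift j := by simpa [ν_index j hj] using hξ.fst_lt_snd (index_pos j hj)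
  exact hlt.ne' hji

end IsCoding

/-- The relation that a coding `ξ` of `ν` has to satisfy between `x = ξ n` and `y = ξ (n + 1)`.
The value of `ξ` at `0` is immaterial for a coding, so the conditions on `ξ 1` are encoded as the
step from `ξ 0 = 1`; this is why `1` occurs in the bound. -/
def IsCodingStep (ν : ℕ → ℕ × ℕ) (n x y : ℕ) : Prop :=
  x < y ∧ (ν y).1 = (ν (n + 1)).1 ∧ max 1 (max (ν y).1 (ν x).2) < (ν y).2

theorem isCoding_of_isCodingStep (hξ : Computable ξ) (h_zero : ξ 0 = 1)
    (h_step : ∀ n, IsCodingStep ν n (ξ n) (ξ (n + 1))) : IsCoding ν ξ := by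
  obtain ⟨hlt, hfst, hsnd⟩ := h_step 0
  refine ⟨hξ, by rwa [h_zero] at hlt, hfst, ?_, fun n _ => ?_⟩
  · exact (max_le_max_left 1 (hfst ▸ le_max_left _ _)).trans_lt hsnd
  · obtain ⟨hlt, hfst, hsnd⟩ := h_step n
    exact ⟨hlt, hfst, (le_max_right _ _).trans_lt hsnd⟩

theorem computablePred_isCodingStep (hν : Computable ν) :
    ComputablePred fun p : (ℕ × ℕ) × ℕ => IsCodingStep ν p.1.1 p.1.2 p.2 := by
  have hn : Computable fun p : (ℕ × ℕ) × ℕ => p.1.1 := Computable.fst.comp Computable.fst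
  have hx : Computable fun p : (ℕ × ℕ) × ℕ => p.1.2 := Computable.snd.comp Computable.fst
  have hy : Computable fun p : (ℕ × ℕ) × ℕ => p.2 := Computable.snd
  have hmax : Computable₂ (max : ℕ → ℕ → ℕ) := Primrec.nat_max.to_comp
  have hfst_y := Computable.fst.comp (hν.comp hy)
  have hsnd_y := Computable.snd.comp (hν.comp hy)
  have hfst_succ := Computable.fst.comp (hν.comp (Computable.succ.comp hn))
  have hbound := hmax.comp (Computable.const 1) <|
    hmax.comp hfst_y (Computable.snd.comp (hν.comp hx))
  exact computablePred_and (computablePred_lt hx hy) <|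
    computablePred_and (computablePred_eq hfst_y hfst_succ) (computablePred_lt hbound hsnd_y)

theorem IsEnumeration.exists_isCodingStep (hν : IsEnumeration ν E) (hE : IC E) (n x : ℕ) :
    ∃ y, IsCodingStep ν n x y := by
  obtain ⟨y, ⟨hfst, hsnd⟩, hxy⟩ :=
    (hν.infinite_indices_of_infinite_class (hE (ν (n + 1)).1)
      (max 1 (max (ν (n + 1)).1 (ν x).2))).exists_gt x
  exact ⟨y, hxy, hfst, hfst ▸ hsnd⟩

theorem IsEnumeration.exists_isCoding (hν : IsEnumeration ν E) (hE : IC E) :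
    ∃ ξ, IsCoding ν ξ := by
  obtain ⟨ξ, hξ, h_zero, h_step⟩ :=
    exists_computable_seq (computablePred_isCodingStep hν.1) (hν.exists_isCodingStep hE) 1
  exact ⟨ξ, isCoding_of_isCodingStep hξ h_zero h_step⟩

end Coding

theorem stmt_3_general (E : Set (ℕ × ℕ)) (hrefl : ∀ n, (n, n) ∈ E) (hsd : SemiDecidableRel E) :
    List.TFAE [
      ∃ (ν : ℕ → ℕ × ℕ) (ξ : ℕ → ℕ), IsEnumeration ν E ∧ IsCoding ν ξ,
      IC E,
      ∀ ν : ℕ → ℕ × ℕ, IsEnumeration ν E → ∃ ξ : ℕ → ℕ, IsCoding ν ξ] := by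
  tfae_have 1 → 2 := fun ⟨_, _, hν, hξ⟩ i => hξ.infinite_class hν (hrefl i)
  tfae_have 2 → 3 := fun hE _ hν => hν.exists_isCoding hE
  tfae_have 3 → 1 := fun h => by
    obtain ⟨ν, hν⟩ := hsd
    obtain ⟨ξ, hξ⟩ := h ν hν
    exact ⟨ν, ξ, hν, hξ⟩
  tfae_finish

theorem stmt_3 (E : Set (ℕ × ℕ)) (hE : IsEquivRel E) (hsd : SemiDecidableRel E) :
    List.TFAE [
      ∃ (ν : ℕ → ℕ × ℕ) (ξ : ℕ → ℕ), IsEnumeration ν E ∧ IsCoding ν ξ,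
      IC E,
      ∀ ν : ℕ → ℕ × ℕ, IsEnumeration ν E → ∃ ξ : ℕ → ℕ, IsCoding ν ξ] :=
  stmt_3_general E hE.1 hsd
end

section
/- There is a semi-decidable equivalence relation E on ℕ, with every equivalence class finite (FC), such that E is not the transitive closure of any decidable relation on ℕ. (Such an E is given by: (x,y) ∈ E iff x = y, or min{x,y} is even with min{x,y}/2 ∈ A and |x−y| = 1, where A is any semi-decidable but not decidable subset of ℕ.) -/
/-!
Let `E` glue `2 * a` to `2 * a + 1` for each `a ∈ A`, so that every class has at most two elements.
If `E = tc R`, an `R`-path from `2 * a` to `2 * a + 1` has a step that leaves `2 * a`, and this step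
can only lead to `2 * a + 1`. Hence `a ∈ A` if and only if `(2 * a, 2 * a + 1) ∈ R`, and a decision
procedure for `R` would decide `A`. For `A`, take the halting set.
-/

section Enumeration

variable {α β γ : Type*} [Primcodable α] [Primcodable β] [Primcodable γ]

theorem computable_sumElim {f : α → γ} {g : β → γ} (hf : Computable f) (hg : Computable g) :
    Computable (Sum.elim f g) :=
  (Computable.sumCasesOn Computable.id (hf.comp Computable.snd).to₂
    (hg.comp Computable.snd).to₂).of_eq fun q ↦ by cases q <;> rfl

theorem exists_computable_pos_enumeration_of_range [Nonempty α] {f : α → β} (hf : Computable f) :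
    ∃ ν : ℕ → β, Computable ν ∧ Set.range f = {b | ∃ n, 1 ≤ n ∧ ν n = b} := by
  obtain ⟨a₀⟩ := ‹Nonempty α›
  refine ⟨fun n ↦ f ((Encodable.decode n.pred).getD a₀), hf.comp (Computable.option_getD
    (Computable.decode.comp Computable.pred) (Computable.const a₀)), ?_⟩
  ext b
  constructor
  · rintro ⟨a, rfl⟩
    exact ⟨Encodable.encode a + 1, by lia, by simp⟩
  · rintro ⟨n, -, rfl⟩
    exact Set.mem_range_self _

open Nat.Partrec in
theorem exists_computable_range_eq_of_rePred {S : Set α} (hS : REPred (· ∈ S))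
    (hne : S.Nonempty) : ∃ f : ℕ × α → α, Computable f ∧ Set.range f = S := by
  obtain ⟨a₀, ha₀⟩ := hne
  obtain ⟨c, hc⟩ := Code.exists_code.1 hS
  have mem_iff (a : α) : a ∈ S ↔ ∃ k, (Code.evaln k c (Encodable.encode a)).isSome := by
    have dom_iff : (Code.eval c (Encodable.encode a)).Dom ↔ a ∈ S := by
      simp [hc, Part.assert]
    simp only [← dom_iff, Part.dom_iff_mem, Code.evaln_complete, Option.isSome_iff_exists,
      Option.mem_def]
    exact exists_comm
  -- At `(k, a)`, run the semi-decision procedure for `a` with bound `k`; output `a` if it halts.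
  refine ⟨fun p ↦ bif (Code.evaln p.1 c (Encodable.encode p.2)).isSome then p.2 else a₀, ?_, ?_⟩
  · have evaln_primrec : Primrec fun p : ℕ × α ↦ Code.evaln p.1 c (Encodable.encode p.2) :=
      Code.primrec_evaln.comp
        ((Primrec.fst.pair (Primrec.const c)).pair (Primrec.encode.comp Primrec.snd))
    exact (Primrec.cond (Primrec.option_isSome.comp evaln_primrec) Primrec.snd
      (Primrec.const a₀)).to_comp
  · ext a
    constructor
    · rintro ⟨⟨k, b⟩, rfl⟩
      cases halts : (Code.evaln k c (Encodable.encode b)).isSome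
      · simpa [halts] using ha₀
      · simpa [halts] using (mem_iff b).2 ⟨k, halts⟩
    · intro ha
      obtain ⟨k, hk⟩ := (mem_iff a).1 ha
      exact ⟨(k, a), by simp [hk]⟩

end Enumeration

theorem semiDecidableSet_of_rePred {A : Set ℕ} (hA : REPred (· ∈ A)) (hne : A.Nonempty) :
    SemiDecidableSet A := by
  obtain ⟨f, hf, rfl⟩ := exists_computable_range_eq_of_rePred hA hne
  exact exists_computable_pos_enumeration_of_range hf

theorem exists_computable_range_eq_of_semiDecidableSet {A : Set ℕ} (hA : SemiDecidableSet A) :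
    ∃ f : ℕ → ℕ, Computable f ∧ Set.range f = A := by
  obtain ⟨f, hf, rfl⟩ := hA
  refine ⟨fun n ↦ f (n + 1), hf.comp Computable.succ, ?_⟩
  ext a
  constructor
  · rintro ⟨n, rfl⟩
    exact ⟨n + 1, by lia, rfl⟩
  · rintro ⟨n, hn, rfl⟩
    exact ⟨n - 1, by simp only [Nat.sub_add_cancel hn]⟩

open Nat.Partrec in
theorem exists_semiDecidableSet_not_computablePred :
    ∃ A : Set ℕ, SemiDecidableSet A ∧ ¬ ComputablePred (· ∈ A) := by
  refine ⟨{n | (Code.eval (Denumerable.ofNat Code n) 0).Dom}, semiDecidableSet_of_rePred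
    (Partrec.comp (ComputablePred.halting_problem_re 0) (Computable.ofNat Code))
    ⟨Encodable.encode Code.zero, ?_⟩, fun h ↦ ComputablePred.halting_problem 0 ?_⟩
  · simp [Code.eval, pure, PFun.pure]
  · exact ComputablePred.computable_of_manyOneReducible
      ⟨Encodable.encode, Computable.encode, fun c ↦ by simp⟩ h

section TransGen

variable {α : Type*} {r : α → α → Prop} {x y : α}

theorem exists_rel_ne_of_transGen (h : Relation.TransGen r x y) (hxy : x ≠ y) :
    ∃ z, z ≠ x ∧ r x z := by
  induction h using Relation.TransGen.head_induction_on with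
  | single hxy' => exact ⟨y, hxy.symm, hxy'⟩
  | @head x z hxz _ ih =>
    by_cases hzx : z = x
    · exact hzx ▸ ih (hzx ▸ hxy)
    · exact ⟨z, hzx, hxz⟩

theorem transGen_iff_of_forall_eq_or_eq (hxy : x ≠ y) (hr : ∀ z, r x z → z = x ∨ z = y) :
    Relation.TransGen r x y ↔ r x y := by
  refine ⟨fun h ↦ ?_, .single⟩
  obtain ⟨z, hzx, hxz⟩ := exists_rel_ne_of_transGen h hxy
  exact (hr z hxz).resolve_left hzx ▸ hxz

end TransGen

/-- The relation on `ℕ` gluing `2 * a` to `2 * a + 1` for every `a ∈ A`. Two numbers lie in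
a common block `{2 * a, 2 * a + 1}` exactly when they have the same truncated half;
`halfGluing_eq_min_max` recovers the description by `min` and `max`. -/
def halfGluing (A : Set ℕ) : Set (ℕ × ℕ) :=
  {p | p.1 = p.2 ∨ p.1 / 2 = p.2 / 2 ∧ p.1 / 2 ∈ A}

section HalfGluing

variable {A : Set ℕ}

theorem mem_halfGluing {x y : ℕ} : (x, y) ∈ halfGluing A ↔ x = y ∨ x / 2 = y / 2 ∧ x / 2 ∈ A :=
  Iff.rfl

theorem halfGluing_eq_min_max (A : Set ℕ) :
    halfGluing A = {p : ℕ × ℕ | p.1 = p.2 ∨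
      (min p.1 p.2 % 2 = 0 ∧ min p.1 p.2 / 2 ∈ A ∧ max p.1 p.2 = min p.1 p.2 + 1)} := by
  ext ⟨x, y⟩
  have same_half_iff (hxy : x ≠ y) :
      x / 2 = y / 2 ↔ min x y % 2 = 0 ∧ max x y = min x y + 1 := by lia
  have min_half (h : x / 2 = y / 2) : min x y / 2 = x / 2 := by lia
  rw [mem_halfGluing, Set.mem_ofPred_eq]
  by_cases hxy : x = y
  · simp only [hxy, true_or]
  · grind

theorem two_mul_mem_halfGluing_iff {a : ℕ} : (2 * a, 2 * a + 1) ∈ halfGluing A ↔ a ∈ A := by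
  have hhalf : (2 * a + 1) / 2 = a := by lia
  simp [halfGluing, hhalf]

theorem eq_or_eq_of_two_mul_mem_halfGluing {a z : ℕ} (h : (2 * a, z) ∈ halfGluing A) :
    z = 2 * a ∨ z = 2 * a + 1 := by
  rcases h with h | ⟨h, -⟩ <;> grind

theorem isEquivRel_halfGluing (A : Set ℕ) : IsEquivRel (halfGluing A) := by
  refine ⟨fun n ↦ .inl rfl, fun i j ↦ ?_, fun i j k ↦ ?_⟩ <;> simp only [mem_halfGluing]
  · rintro (h | ⟨hij, hi⟩)
    · exact .inl h.symm
    · exact .inr ⟨hij.symm, hij ▸ hi⟩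
  · rintro (rfl | ⟨hij, hi⟩) (rfl | ⟨hjk, hj⟩)
    · exact .inl rfl
    · exact .inr ⟨hjk, hj⟩
    · exact .inr ⟨hij, hi⟩
    · exact .inr ⟨hij.trans hjk, hi⟩

theorem fc_halfGluing (A : Set ℕ) : FC (halfGluing A) := by
  refine fun i ↦ (Set.finite_Iic (i + 1)).subset fun j hj ↦ ?_
  rcases hj with h | ⟨h, -⟩ <;> grind

theorem halfGluing_range {ι : Type*} (f : ι → ℕ) :
    halfGluing (Set.range f) = Set.range (Sum.elim (fun n : ℕ ↦ (n, n)) fun q : Bool × ι ↦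
      bif q.1 then (2 * f q.2, 2 * f q.2 + 1) else (2 * f q.2 + 1, 2 * f q.2)) := by
  ext ⟨x, y⟩
  rw [mem_halfGluing, Set.Sum.elim_range]
  constructor
  · rintro (rfl | ⟨hhalf, i, hi⟩)
    · exact .inl ⟨x, rfl⟩
    · rcases lt_trichotomy x y with hxy | rfl | hxy
      · exact .inr ⟨(true, i), Prod.ext (by grind) (by grind)⟩
      · exact .inl ⟨x, rfl⟩
      · exact .inr ⟨(false, i), Prod.ext (by grind) (by grind)⟩
  · rintro (⟨n, hn⟩ | ⟨⟨_ | _, i⟩, hi⟩) <;>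
      simp only [cond_true, cond_false, Prod.mk.injEq] at *
    · exact .inl (hn.1.symm.trans hn.2)
    · exact .inr ⟨by lia, i, by lia⟩
    · exact .inr ⟨by lia, i, by lia⟩

theorem semiDecidableRel_halfGluing (hA : SemiDecidableSet A) :
    SemiDecidableRel (halfGluing A) := by
  obtain ⟨f, hf, rfl⟩ := exists_computable_range_eq_of_semiDecidableSet hA
  have diagonal : Computable fun n : ℕ ↦ (n, n) := Computable.id.pair Computable.id
  have even : Computable fun q : Bool × ℕ ↦ 2 * f q.2 :=
    Primrec.nat_double.to_comp.comp (hf.comp Computable.snd)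
  have odd : Computable fun q : Bool × ℕ ↦ 2 * f q.2 + 1 := Computable.succ.comp even
  rw [halfGluing_range]
  exact exists_computable_pos_enumeration_of_range
    (computable_sumElim diagonal (Computable.cond Computable.fst (even.pair odd) (odd.pair even)))

theorem not_exists_decidableRelSet_halfGluing_eq_tc (hA : ¬ ComputablePred (· ∈ A)) :
    ¬ ∃ R : Set (ℕ × ℕ), DecidableRelSet R ∧ halfGluing A = tc R := by
  rintro ⟨R, hR, hE⟩
  have subset_halfGluing : R ⊆ halfGluing A := fun _ h ↦ hE ▸ Relation.TransGen.single h
  have mem_iff (a : ℕ) : a ∈ A ↔ (2 * a, 2 * a + 1) ∈ R := by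
    rw [← two_mul_mem_halfGluing_iff, hE]
    exact transGen_iff_of_forall_eq_or_eq (r := fun i j ↦ (i, j) ∈ R) (by lia) fun z hz ↦
      eq_or_eq_of_two_mul_mem_halfGluing (subset_halfGluing hz)
  have pair_computable : Computable fun a : ℕ ↦ (2 * a, 2 * a + 1) :=
    (Primrec.nat_double.pair Primrec.nat_double_succ).to_comp
  exact hA (ComputablePred.computable_of_manyOneReducible
    ⟨_, pair_computable, mem_iff⟩ hR)

end HalfGluing

theorem stmt_5 :
    ∃ E : Set (ℕ × ℕ), IsEquivRel E ∧ SemiDecidableRel E ∧ FC E ∧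
      (¬ ∃ R : Set (ℕ × ℕ), DecidableRelSet R ∧ E = tc R) ∧
      ∃ A : Set ℕ, SemiDecidableSet A ∧ ¬ ComputablePred (fun a => a ∈ A) ∧
        E = {p : ℕ × ℕ | p.1 = p.2 ∨
          (min p.1 p.2 % 2 = 0 ∧ min p.1 p.2 / 2 ∈ A ∧
            max p.1 p.2 = min p.1 p.2 + 1)} := by
  obtain ⟨A, hA, hA'⟩ := exists_semiDecidableSet_not_computablePred
  exact ⟨halfGluing A, isEquivRel_halfGluing A, semiDecidableRel_halfGluing hA, fc_halfGluing A,
    not_exists_decidableRelSet_halfGluing_eq_tc hA', A, hA, hA', halfGluing_eq_min_max A⟩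
end
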